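/- Let g be a Lie algebra over k that is central over k, and let K be a commutative associative unital k-algebra. Then the Lie algebra g ⊗_k K over K is central over K; that is, every K-module endomorphism χ of g ⊗_k K satisfying χ([x,y]) = [x,χ(y)] for all x, y ∈ g ⊗_k K is multiplication by some element of K. -/

import Mathlib

/-!
Slice `K ⊗ g` by the linear forms `φ : K → k`. For each `φ`, the map
`x ↦ (φ ⊗ id) (χ (1 ⊗ x))` lies in the centroid of `g`, hence is multiplication by some
`c φ ∈ k`. Fixing `x₀ ∈ g` and `f : g → k` linear with `f x₀ = 1`, the single element
`a = (id ⊗ f) (χ (1 ⊗ x₀))` of `K` satisfies `φ a = c φ` for all `φ` at once, because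
`φ ∘ (id ⊗ f) = f ∘ (φ ⊗ id)`. So `χ (1 ⊗ x)` and `a ⊗ x` have the same slices, and slices
separate the points of `K ⊗ g` (`eq_of_slice_eq`).
-/

open scoped TensorProduct

/-- The slice map `φ ⊗ id : K ⊗ V → V` attached to a linear form `φ` on `K`. -/
noncomputable def slice {k K V : Type*} [Field k] [AddCommGroup K] [Module k K]
    [AddCommGroup V] [Module k V] (φ : K →ₗ[k] k) : (K ⊗[k] V) →ₗ[k] V :=
  (TensorProduct.lid k V).toLinearMap ∘ₗ φ.rTensor V

@[simp]
theorem slice_tmul {k K V : Type*} [Field k] [AddCommGroup K] [Module k K]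
    [AddCommGroup V] [Module k V] (φ : K →ₗ[k] k) (s : K) (v : V) :
    slice φ (s ⊗ₜ[k] v) = φ s • v := by
  simp [slice]

/-- Slices separate points: the slices along the coordinate forms of a basis of `K` are the
coefficients of an element of `K ⊗ V` with respect to that basis. -/
theorem eq_of_slice_eq {k K V : Type*} [Field k] [AddCommGroup K] [Module k K]
    [AddCommGroup V] [Module k V] {s t : K ⊗[k] V}
    (h : ∀ φ : K →ₗ[k] k, slice φ s = slice φ t) : s = t := by
  classical
  apply (TensorProduct.equivFinsuppOfBasisLeft (N := V) (Module.Basis.ofVectorSpace k K)).injective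
  ext i
  simpa [slice, TensorProduct.equivFinsuppOfBasisLeft_apply] using
    h ((Module.Basis.ofVectorSpace k K).coord i)

theorem slice_lie {k K g : Type*} [Field k] [CommRing K] [Algebra k K] [LieRing g]
    [LieAlgebra k g] (φ : K →ₗ[k] k) (x : g) (t : K ⊗[k] g) :
    slice φ ⁅(1 : K) ⊗ₜ[k] x, t⁆ = ⁅x, slice φ t⁆ := by
  induction t with
  | zero => simp
  | tmul s y => simp [LieAlgebra.ExtendScalars.bracket_tmul]
  | add s t hs ht => simp [hs, ht]

/-- If `g` is a Lie algebra over `k` that is central over `k`, and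
`K` is a commutative associative unital `k`-algebra, then the Lie algebra
`g ⊗_k K` over `K` is central over `K`: every `K`-module endomorphism `χ` of
`g ⊗_k K` with `χ[x,y] = [x, χ y]` is multiplication by an element of `K`. -/
theorem statement11 {k : Type*} [Field k] [CharZero k]
    {g : Type*} [LieRing g] [LieAlgebra k g]
    (hcentral : ∀ χ : g →ₗ[k] g,
      (∀ x y : g, χ ⁅x, y⁆ = ⁅x, χ y⁆) → ∃ a : k, ∀ x : g, χ x = a • x)
    {K : Type*} [CommRing K] [Algebra k K]
    (χ : (K ⊗[k] g) →ₗ[K] (K ⊗[k] g))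
    (hχ : ∀ x y : K ⊗[k] g, χ ⁅x, y⁆ = ⁅x, χ y⁆) :
    ∃ a : K, ∀ x : K ⊗[k] g, χ x = a • x := by
  have hslice (φ : K →ₗ[k] k) : ∃ c : k, ∀ x : g, slice φ (χ (1 ⊗ₜ x)) = c • x := by
    refine hcentral (slice φ ∘ₗ χ.restrictScalars k ∘ₗ TensorProduct.mk k K g 1) fun x y ↦ ?_
    have h := hχ (1 ⊗ₜ x) (1 ⊗ₜ y)
    rw [LieAlgebra.ExtendScalars.bracket_tmul, one_mul] at h
    simp [h, slice_lie]
  rcases subsingleton_or_nontrivial g with hg | hg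
  · exact ⟨0, fun x ↦ Subsingleton.elim _ _⟩
  obtain ⟨x₀, hx₀⟩ := exists_ne (0 : g)
  obtain ⟨f, hf⟩ := Module.Projective.exists_dual_eq_one k hx₀
  let F : (K ⊗[k] g) →ₗ[k] K := (TensorProduct.rid k K).toLinearMap ∘ₗ f.lTensor K
  have hF (φ : K →ₗ[k] k) (t : K ⊗[k] g) : φ (F t) = f (slice φ t) := by
    induction t with
    | zero => simp
    | tmul s y => simp [F, mul_comm]
    | add s t hs ht => simp [hs, ht]
  have key (x : g) : χ (1 ⊗ₜ x) = F (χ (1 ⊗ₜ x₀)) ⊗ₜ x := by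
    refine eq_of_slice_eq fun φ ↦ ?_
    obtain ⟨c, hc⟩ := hslice φ
    rw [slice_tmul, hF, hc, hc, map_smul, hf, smul_eq_mul, mul_one]
  refine ⟨F (χ (1 ⊗ₜ x₀)), fun t ↦ ?_⟩
  induction t with
  | zero => simp
  | tmul s y =>
    have hs : s ⊗ₜ[k] y = s • ((1 : K) ⊗ₜ[k] y) := by simp [TensorProduct.smul_tmul']
    rw [hs, map_smul, key, smul_comm, TensorProduct.smul_tmul' (F _), smul_eq_mul, mul_one]
  | add s t hs ht => rw [map_add, hs, ht, smul_add]
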